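/- arXiv:q-alg/9506028 — 4 statements merged into one kernel-verified Lean document; each statement's English description precedes it below -/
import Mathlib

section
/- Let q, M be real numbers with 0 < q < 1 and M > 0, and let m be a nonzero real number. Then every sequence (a_r)_{r∈ℕ} of nonnegative real numbers satisfying the recursion a_{r+1} = a_r · (M² − q^{−2r−2} m²) · q² for all r ∈ ℕ must vanish at some index, i.e. there exists r ∈ ℕ with a_r = 0. -/
/-!
Since `0 < |q| < 1`, the powers `q ^ (-2 * r - 2)` are unbounded, so the factor relating `a (r + 1)`
to `a r` is negative for some `r`. As `a r` and `a (r + 1)` are both nonnegative, `a r = 0`.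
-/

theorem zpow_neg_two_mul_sub_two {G : Type*} [DivisionMonoid G] (q : G) (r : ℕ) :
    q ^ (-2 * (r : ℤ) - 2) = (q ^ 2)⁻¹ ^ (r + 1) := by
  rw [inv_pow, ← pow_mul, ← zpow_natCast, ← zpow_neg]
  congr 1
  push_cast
  ring

section ArchimedeanField

variable {K : Type*} [Field K] [LinearOrder K] [IsStrictOrderedRing K] [Archimedean K]

theorem exists_lt_pow_succ_mul_of_one_lt {x c : K} (hx : 1 < x) (hc : 0 < c) (b : K) :
    ∃ n : ℕ, b < x ^ (n + 1) * c := by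
  obtain ⟨n, hn⟩ := pow_unbounded_of_one_lt (b / c) hx
  have hsucc : b / c < x ^ (n + 1) := hn.trans (pow_lt_pow_right₀ hx n.lt_succ_self)
  exact ⟨n, (div_lt_iff₀ hc).1 hsucc⟩

theorem exists_sub_zpow_mul_neg {q c : K} (hq0 : q ≠ 0) (hq1 : |q| < 1) (hc : 0 < c) (b : K) :
    ∃ r : ℕ, b - q ^ (-2 * (r : ℤ) - 2) * c < 0 := by
  have hinv : 1 < (q ^ 2)⁻¹ :=
    (one_lt_inv₀ (sq_pos_of_ne_zero hq0)).2 ((sq_lt_one_iff_abs_lt_one q).2 hq1)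
  simpa only [zpow_neg_two_mul_sub_two, sub_neg] using exists_lt_pow_succ_mul_of_one_lt hinv hc b

theorem exists_zero_of_momentum_norm_recursion_general
    {q b c : K} (hq0 : q ≠ 0) (hq1 : |q| < 1) (hc : 0 < c) {a : ℕ → K} (hpos : ∀ r, 0 ≤ a r)
    (hrec : ∀ r : ℕ, a (r + 1) = a r * (b - q ^ (-2 * (r : ℤ) - 2) * c) * q ^ 2) :
    ∃ r, a r = 0 := by
  obtain ⟨r, hneg⟩ := exists_sub_zpow_mul_neg hq0 hq1 hc b
  have hnext : 0 ≤ a r * (b - q ^ (-2 * (r : ℤ) - 2) * c) * q ^ 2 := hrec r ▸ hpos (r + 1)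
  have hmul : 0 ≤ a r * (b - q ^ (-2 * (r : ℤ) - 2) * c) :=
    nonneg_of_mul_nonneg_left hnext (sq_pos_of_ne_zero hq0)
  have hle : a r ≤ 0 := nonpos_of_mul_nonneg_left hmul hneg
  exact ⟨r, hle.antisymm (hpos r)⟩

end ArchimedeanField

/-- Let `q, M` be real numbers with `0 < q < 1` and `M > 0`, and let `m` be a
nonzero real number. Then every sequence `(a r)` of nonnegative real numbers satisfying the
recursion `a (r+1) = a r * (M² − q^(−2r−2) m²) * q²` for all `r` must vanish at some index. -/
theorem exists_zero_of_momentum_norm_recursion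
    (q M m : ℝ) (hq0 : 0 < q) (hq1 : q < 1) (hM : 0 < M) (hm : m ≠ 0)
    (a : ℕ → ℝ) (hpos : ∀ r, 0 ≤ a r)
    (hrec : ∀ r : ℕ, a (r + 1) = a r * (M ^ 2 - q ^ (-2 * (r : ℤ) - 2) * m ^ 2) * q ^ 2) :
    ∃ r, a r = 0 :=
  exists_zero_of_momentum_norm_recursion_general hq0.ne' ((abs_of_pos hq0).trans_lt hq1)
    (sq_pos_of_ne_zero hm) hpos hrec
end

section
/- Let q, μ, ω be real numbers with 0 < q < 1, μ > 0, and ω ∈ ℝ. Then every sequence (a_m)_{m∈ℕ} of nonnegative real numbers satisfying the recursion a_{m+1} = a_m · ( ω q^{−m} μ^{−1} + q^{1/2} (1 − μ^{−2} q^{−2m}) / ((q² − 1)(q − 1)) ) for all m ∈ ℕ must vanish at some index, i.e. there exists m ∈ ℕ with a_m = 0. -/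
/-!
In the variable `y = q⁻ᵐ μ⁻¹` the factor of the recursion is the quadratic `-c y² + ω y + c` with
`c = q^(1/2) / ((q² - 1)(q - 1)) > 0`. Since `0 < q < 1`, `|y|` tends to infinity with `m`, so the
factor is eventually negative, and a positive `a m` would then make `a (m + 1)` negative.
-/

open Filter Bornology

/-- The factor by which the squared norm of `(L⁰¹)ᵐ ψ` changes when the raising operator `L⁰¹` is
applied once more; `μ ^ 2` is the eigenvalue of `k¹` on `ψ` and `ω` that of the Casimir. The powers
of `q` depending on `m` are integer powers, the prefactor `q ^ (1 / 2)` is a real power. -/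
noncomputable def angularNormFactor (q μ ω : ℝ) (m : ℕ) : ℝ :=
  ω * q ^ (-(m : ℤ)) * μ⁻¹ +
    q ^ ((1 : ℝ) / 2) * (1 - (μ ^ 2)⁻¹ * q ^ (-2 * (m : ℤ))) / ((q ^ 2 - 1) * (q - 1))

/-- The number `c` such that `angularNormFactor`, as a quadratic polynomial in `q⁻ᵐ μ⁻¹`, has
leading coefficient `-c` and constant term `c`. -/
noncomputable def angularNormCoeff (q : ℝ) : ℝ :=
  q ^ ((1 : ℝ) / 2) / ((q ^ 2 - 1) * (q - 1))

theorem tendsto_pow_atTop_cobounded_of_one_lt_norm {R : Type*} [SeminormedRing R] [NormOneClass R]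
    [NormMulClass R] {x : R} (hx : 1 < ‖x‖) :
    Tendsto (fun n : ℕ ↦ x ^ n) atTop (cobounded R) := by
  rw [← tendsto_norm_atTop_iff_cobounded]
  simpa only [norm_pow] using tendsto_pow_atTop_atTop_of_one_lt hx

theorem tendsto_quadratic_cobounded_atBot {K : Type*} [Field K] [LinearOrder K]
    [IsStrictOrderedRing K] [Bornology K] [IsOrderBornology K] {a : K} (ha : a < 0) (b c : K) :
    Tendsto (fun y ↦ a * y ^ 2 + b * y + c) (cobounded K) atBot := by
  have hfactored : (fun y ↦ a * y ^ 2 + b * y + c) = fun y ↦ (a * y + b) * y + c := by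
    ext y
    ring
  rw [hfactored, IsOrderBornology.cobounded_eq]
  refine tendsto_atBot_add_const_right _ c (tendsto_sup.2 ⟨?_, ?_⟩)
  · exact (tendsto_atTop_add_const_right _ b
      (tendsto_id.const_mul_atBot_of_neg ha)).atTop_mul_atBot₀ tendsto_id
  · exact (tendsto_atBot_add_const_right _ b
      (tendsto_id.const_mul_atTop_of_neg ha)).atBot_mul_atTop₀ tendsto_id

theorem angularNormCoeff_pos {q : ℝ} (hq0 : 0 < q) (hq1 : q < 1) : 0 < angularNormCoeff q := by
  have hsq : q ^ 2 < 1 := pow_lt_one₀ hq0.le hq1 two_ne_zero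
  exact div_pos (Real.rpow_pos_of_pos hq0 _)
    (mul_pos_of_neg_of_neg (sub_neg.2 hsq) (sub_neg.2 hq1))

theorem angularNormFactor_eq_quadratic (q μ ω : ℝ) (m : ℕ) :
    angularNormFactor q μ ω m =
      -angularNormCoeff q * (q⁻¹ ^ m * μ⁻¹) ^ 2 + ω * (q⁻¹ ^ m * μ⁻¹) + angularNormCoeff q := by
  have hpow : q ^ (-(m : ℤ)) = q⁻¹ ^ m := by rw [zpow_neg, zpow_natCast, inv_pow]
  have hpow_sq : q ^ (-2 * (m : ℤ)) = (q⁻¹ ^ m) ^ 2 := by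
    rw [neg_mul_comm, mul_comm, zpow_mul, hpow, zpow_ofNat]
  rw [angularNormFactor, angularNormCoeff, hpow, hpow_sq, ← inv_pow]
  ring

theorem tendsto_angularNormFactor_atBot {q μ : ℝ} (hq0 : 0 < q) (hq1 : q < 1) (hμ : μ ≠ 0)
    (ω : ℝ) : Tendsto (angularNormFactor q μ ω) atTop atBot := by
  have hnorm : 1 < ‖q⁻¹‖ := ((one_lt_inv₀ hq0).2 hq1).trans_le (Real.le_norm_self _)
  have hy : Tendsto (fun m : ℕ ↦ q⁻¹ ^ m * μ⁻¹) atTop (cobounded ℝ) :=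
    (tendsto_mul_right_cobounded (inv_ne_zero hμ)).comp
      (tendsto_pow_atTop_cobounded_of_one_lt_norm hnorm)
  have hc : -angularNormCoeff q < 0 := neg_neg_of_pos (angularNormCoeff_pos hq0 hq1)
  exact ((tendsto_quadratic_cobounded_atBot hc ω _).comp hy).congr
    fun m ↦ (angularNormFactor_eq_quadratic q μ ω m).symm

theorem exists_zero_of_angular_norm_recursion_general {q μ : ℝ} (hq0 : 0 < q) (hq1 : q < 1)
    (hμ : μ ≠ 0) (ω : ℝ) {a : ℕ → ℝ} (hpos : ∀ m, 0 ≤ a m)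
    (hrec : ∀ m, a (m + 1) = a m * angularNormFactor q μ ω m) :
    ∀ᶠ m in atTop, a m = 0 := by
  have hneg : ∀ᶠ m in atTop, angularNormFactor q μ ω m < 0 :=
    (tendsto_angularNormFactor_atBot hq0 hq1 hμ ω).eventually_lt_atBot 0
  filter_upwards [hneg] with m hm
  have hnext : 0 ≤ a m * angularNormFactor q μ ω m := hrec m ▸ hpos (m + 1)
  exact le_antisymm (nonpos_of_mul_nonneg_left hnext hm) (hpos m)

/-- Let `q, μ, ω` be real with `0 < q < 1`, `μ > 0`, `ω ∈ ℝ`. Then every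
sequence `(a m)` of nonnegative reals satisfying
`a (m+1) = a m * (ω q^(−m) μ⁻¹ + q^(1/2) (1 − μ^(−2) q^(−2m)) / ((q²−1)(q−1)))`
for all `m` must vanish at some index. -/
theorem exists_zero_of_angular_norm_recursion
    (q μ ω : ℝ) (hq0 : 0 < q) (hq1 : q < 1) (hμ : 0 < μ)
    (a : ℕ → ℝ) (hpos : ∀ m, 0 ≤ a m)
    (hrec : ∀ m : ℕ, a (m + 1) =
      a m * (ω * q ^ (-(m : ℤ)) * μ⁻¹ +
        q ^ ((1 : ℝ) / 2) * (1 - (μ ^ 2)⁻¹ * q ^ (-2 * (m : ℤ))) / ((q ^ 2 - 1) * (q - 1)))) :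
    ∃ m, a m = 0 :=
  (exists_zero_of_angular_norm_recursion_general hq0 hq1 hμ.ne' ω hpos hrec).exists
end

section
/- Let M > 0 and μ > 0 be real numbers and let f : (0,∞) → ℝ be continuous. For q ∈ (0,1) set a(q) = ⌊log_{q²}(μ/M²)⌋ and α(q,ν) = (ν (q^{−2} − 1))^{−1/2} for ν > 0. Then the limit as q → 1 from below of α(q,μ) · ∫ f(ν) α(q,ν) dν, taken over the interval ν ∈ (M² q^{2a(q)+2}, M² q^{2a(q)}], equals f(μ). That is, the rescaled q-lattice eigenvectors form a delta-convergent family as q → 1⁻. -/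
open MeasureTheory

/-!
Write `b = M² q^(2a(q))`. The definition of `a(q)` as an integer part says exactly that
`b q² < μ ≤ b`, so both endpoints of the cell `(b q², b]` tend to `μ` as `q → 1⁻`. Moreover
`α(q,μ) α(q,ν) = (q⁻² - 1)⁻¹ (√(μ ν))⁻¹`, and the length of the cell is `b q² (q⁻² - 1)`. The
singular factor `(q⁻² - 1)⁻¹` therefore cancels, and the pairing equals `b q²` times the average of
`f ν / √(μ ν)` over the cell, which tends to `μ * (f μ / μ)`.
-/

section

open Filter Set intervalIntegral
open scoped Topology

/-- The eigenvalue `M² q^(2n)` of the momentum on the `n`-th lattice state. It labels the cell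
`(M² q^(2n+2), M² q^(2n)]` by its upper endpoint. -/
noncomputable def qMomentum (M q : ℝ) (n : ℤ) : ℝ :=
  M ^ 2 * q ^ (2 * n)

/-- The index `π̃(μ,q) = ⌊log_{q²}(μ/M²)⌋` of the cell that contains `μ`. -/
noncomputable def qMomentumIndex (M μ q : ℝ) : ℤ :=
  ⌊Real.logb (q ^ 2) (μ / M ^ 2)⌋

/-- The normalization `α(q,ν) = (ν (q⁻² - 1))^(-1/2)` of the eigenvector `‖ν⟩_q`. -/
noncomputable def qNormalization (q ν : ℝ) : ℝ :=
  (√(ν * (q ^ (-2 : ℤ) - 1)))⁻¹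

variable {E : Type*} [NormedAddCommGroup E] [NormedSpace ℝ E]

theorem tendsto_intervalAverage_of_tendsto_ae [CompleteSpace E] {ι : Type*} {lt : Filter ι} {a : ℝ}
    {l l' : Filter ℝ} [FTCFilter a l l'] {f : ℝ → E} {c : E} {u v : ι → ℝ}
    (hfm : StronglyMeasurableAtFilter f l') (hf : Tendsto f (l' ⊓ ae volume) (𝓝 c))
    (hu : Tendsto u lt l) (hv : Tendsto v lt l) (huv : ∀ᶠ i in lt, u i ≠ v i) :
    Tendsto (fun i ↦ ⨍ x in u i..v i, f x) lt (𝓝 c) := by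
  have hlittleO := integral_sub_linear_isLittleO_of_tendsto_ae hfm hf hu hv
  have hdiff := hlittleO.tendsto_inv_smul_nhds_zero.add_const c
  rw [zero_add] at hdiff
  refine hdiff.congr' ?_
  filter_upwards [huv] with i hi
  rw [interval_average_eq, Pi.sub_apply, smul_sub, inv_smul_smul₀ (sub_ne_zero.2 hi.symm),
    sub_add_cancel]

theorem mem_Ioc_zpow_floor_logb {b x : ℝ} (hb₀ : 0 < b) (hb₁ : b < 1) (hx : 0 < x) :
    x ∈ Ioc (b ^ (⌊Real.logb b x⌋ + 1)) (b ^ ⌊Real.logb b x⌋) := by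
  simp only [mem_Ioc, ← Real.rpow_intCast]
  rw [← Real.logb_lt_iff_lt_rpow_of_base_lt_one hb₀ hb₁ hx,
    ← Real.le_logb_iff_rpow_le_of_base_lt_one hb₀ hb₁ hx]
  push_cast
  exact ⟨Int.lt_floor_add_one _, Int.floor_le _⟩

theorem qMomentum_add_one (M : ℝ) {q : ℝ} (hq : q ≠ 0) (n : ℤ) :
    qMomentum M q (n + 1) = qMomentum M q n * q ^ 2 := by
  rw [qMomentum, qMomentum, mul_add_one, zpow_add₀ hq, ← mul_assoc, zpow_ofNat]

theorem qMomentum_sub_qMomentum_add_one (M : ℝ) {q : ℝ} (hq : q ≠ 0) (n : ℤ) :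
    qMomentum M q n - qMomentum M q (n + 1) = qMomentum M q (n + 1) * (q ^ (-2 : ℤ) - 1) := by
  rw [qMomentum_add_one M hq, zpow_neg, zpow_ofNat]
  field_simp

theorem qMomentum_pos {M q : ℝ} (hM : M ≠ 0) (hq : 0 < q) (n : ℤ) : 0 < qMomentum M q n := by
  unfold qMomentum
  positivity

theorem qMomentum_add_one_lt {M q : ℝ} (hM : M ≠ 0) (hq₀ : 0 < q) (hq₁ : q < 1) (n : ℤ) :
    qMomentum M q (n + 1) < qMomentum M q n := by
  rw [qMomentum_add_one M hq₀.ne']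
  exact mul_lt_of_lt_one_right (qMomentum_pos hM hq₀ n) (pow_lt_one₀ hq₀.le hq₁ two_ne_zero)

theorem mem_Ioc_qMomentum_qMomentumIndex {M μ q : ℝ} (hM : M ≠ 0) (hμ : 0 < μ) (hq₀ : 0 < q)
    (hq₁ : q < 1) :
    μ ∈ Ioc (qMomentum M q (qMomentumIndex M μ q + 1)) (qMomentum M q (qMomentumIndex M μ q)) := by
  have hM2 : 0 < M ^ 2 := by positivity
  have hmomentum (n : ℤ) : qMomentum M q n = (q ^ 2) ^ n * M ^ 2 := by
    rw [qMomentum, zpow_mul, zpow_ofNat, mul_comm]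
  obtain ⟨hlt, hle⟩ := mem_Ioc_zpow_floor_logb (pow_pos hq₀ 2) (pow_lt_one₀ hq₀.le hq₁ two_ne_zero)
    (div_pos hμ hM2)
  rw [hmomentum, hmomentum]
  exact ⟨(lt_div_iff₀ hM2).1 hlt, (div_le_iff₀ hM2).1 hle⟩

theorem tendsto_qMomentum_qMomentumIndex {M μ : ℝ} (hM : M ≠ 0) (hμ : 0 < μ) :
    Tendsto (fun q ↦ qMomentum M q (qMomentumIndex M μ q)) (𝓝[Ioo 0 1] 1) (𝓝 μ) := by
  have hupper : Tendsto (fun q : ℝ ↦ μ / q ^ 2) (𝓝[Ioo 0 1] 1) (𝓝 μ) := by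
    have h : ContinuousAt (fun q : ℝ ↦ μ / q ^ 2) 1 := by fun_prop (disch := norm_num)
    simpa using h.tendsto.mono_left nhdsWithin_le_nhds
  refine tendsto_of_tendsto_of_tendsto_of_le_of_le' tendsto_const_nhds hupper ?_ ?_ <;>
    filter_upwards [self_mem_nhdsWithin] with q ⟨hq₀, hq₁⟩
  · exact (mem_Ioc_qMomentum_qMomentumIndex hM hμ hq₀ hq₁).2
  · rw [le_div_iff₀ (pow_pos hq₀ 2), ← qMomentum_add_one M hq₀.ne']
    exact (mem_Ioc_qMomentum_qMomentumIndex hM hμ hq₀ hq₁).1.le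

theorem tendsto_qMomentum_qMomentumIndex_add_one {M μ : ℝ} (hM : M ≠ 0) (hμ : 0 < μ) :
    Tendsto (fun q ↦ qMomentum M q (qMomentumIndex M μ q + 1)) (𝓝[Ioo 0 1] 1) (𝓝 μ) := by
  have hsq : Tendsto (fun q : ℝ ↦ q ^ 2) (𝓝[Ioo 0 1] 1) (𝓝 1) := by
    simpa using ((continuous_pow 2).tendsto (1 : ℝ)).mono_left nhdsWithin_le_nhds
  have hmul := (tendsto_qMomentum_qMomentumIndex hM hμ).mul hsq
  rw [mul_one] at hmul
  refine hmul.congr' ?_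
  filter_upwards [self_mem_nhdsWithin] with q hq using (qMomentum_add_one M hq.1.ne' _).symm

theorem qNormalization_mul_qNormalization {μ q : ℝ} (hμ : 0 ≤ μ) (hq₀ : 0 < q) (hq₁ : q < 1)
    (ν : ℝ) :
    qNormalization q μ * qNormalization q ν = (q ^ (-2 : ℤ) - 1)⁻¹ * (√(μ * ν))⁻¹ := by
  have hpos : 0 ≤ q ^ (-2 : ℤ) - 1 :=
    sub_nonneg.2 (one_lt_zpow_of_neg₀ hq₀ hq₁ (by norm_num)).le
  rw [qNormalization, qNormalization, ← mul_inv, ← mul_inv, ← Real.sqrt_mul (mul_nonneg hμ hpos),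
    mul_mul_mul_comm, Real.sqrt_mul' _ (mul_self_nonneg _), Real.sqrt_mul_self hpos, mul_comm]

theorem qNormalization_smul_integral_eq_smul_average {M μ q : ℝ} (hM : M ≠ 0) (hμ : 0 ≤ μ)
    (hq₀ : 0 < q) (hq₁ : q < 1) (f : ℝ → E) (n : ℤ) :
    qNormalization q μ • ∫ ν in Ioc (qMomentum M q (n + 1)) (qMomentum M q n),
        qNormalization q ν • f ν =
      qMomentum M q (n + 1) •
        ⨍ ν in qMomentum M q (n + 1)..qMomentum M q n, (√(μ * ν))⁻¹ • f ν := by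
  rw [← integral_of_le (qMomentum_add_one_lt hM hq₀ hq₁ n).le, ← intervalIntegral.integral_smul]
  simp only [smul_smul, qNormalization_mul_qNormalization hμ hq₀ hq₁]
  simp only [← smul_smul, intervalIntegral.integral_smul]
  rw [interval_average_eq, smul_smul, qMomentum_sub_qMomentum_add_one M hq₀.ne', mul_inv,
    mul_inv_cancel_left₀ (qMomentum_pos hM hq₀ _).ne']

theorem delta_convergence_one_dim_general [CompleteSpace E] {M μ : ℝ} (hM : M ≠ 0) (hμ : 0 < μ)
    {f : ℝ → E} {c : E} (hfm : StronglyMeasurableAtFilter f (𝓝 μ))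
    (hf : Tendsto f (𝓝 μ ⊓ ae volume) (𝓝 c)) :
    Tendsto
      (fun q ↦ qNormalization q μ •
        ∫ ν in Ioc (qMomentum M q (qMomentumIndex M μ q + 1))
            (qMomentum M q (qMomentumIndex M μ q)),
          qNormalization q ν • f ν)
      (𝓝[Ioo 0 1] 1) (𝓝 c) := by
  have hlower := tendsto_qMomentum_qMomentumIndex_add_one hM hμ
  have hweight : Tendsto (fun ν ↦ (√(μ * ν))⁻¹) (𝓝 μ) (𝓝 μ⁻¹) := by
    have h : ContinuousAt (fun ν ↦ (√(μ * ν))⁻¹) μ := by fun_prop (disch := positivity)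
    simpa only [Real.sqrt_mul_self hμ.le] using h.tendsto
  have hweightedMeas : StronglyMeasurableAtFilter (fun ν ↦ (√(μ * ν))⁻¹ • f ν) (𝓝 μ) := by
    obtain ⟨s, hs, hfs⟩ := hfm
    exact ⟨s, hs, AEStronglyMeasurable.smul (by fun_prop) hfs⟩
  have hnondegenerate : ∀ᶠ q in 𝓝[Ioo 0 1] 1,
      qMomentum M q (qMomentumIndex M μ q + 1) ≠ qMomentum M q (qMomentumIndex M μ q) := by
    filter_upwards [self_mem_nhdsWithin] with q hq
      using (qMomentum_add_one_lt hM hq.1 hq.2 _).ne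
  have haverage := tendsto_intervalAverage_of_tendsto_ae hweightedMeas
    ((hweight.mono_left inf_le_left).smul hf) hlower (tendsto_qMomentum_qMomentumIndex hM hμ)
    hnondegenerate
  have hlimit := hlower.smul haverage
  rw [smul_inv_smul₀ hμ.ne'] at hlimit
  refine hlimit.congr' ?_
  filter_upwards [self_mem_nhdsWithin] with q hq
  exact (qNormalization_smul_integral_eq_smul_average hM hμ.le hq.1 hq.2 f _).symm

end

/-- Let `M > 0`, `μ > 0`, and let `f` be continuous on `(0,∞)`. With
`a(q) = ⌊log_{q²}(μ/M²)⌋` and `α(q,ν) = (ν(q⁻²−1))^(−1/2)`, the limit as `q → 1⁻` of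
`α(q,μ) ∫_{(M²q^(2a(q)+2), M²q^(2a(q))]} f(ν) α(q,ν) dν` equals `f(μ)`:
the rescaled q-lattice eigenvectors form a delta-convergent family. -/
theorem delta_convergence_one_dim
    (M μ : ℝ) (hM : 0 < M) (hμ : 0 < μ)
    (f : ℝ → ℝ) (hf : ContinuousOn f (Set.Ioi 0)) :
    Filter.Tendsto
      (fun q : ℝ =>
        (Real.sqrt (μ * (q ^ (-2 : ℤ) - 1)))⁻¹ *
          ∫ ν in Set.Ioc (M ^ 2 * q ^ (2 * ⌊Real.logb (q ^ 2) (μ / M ^ 2)⌋ + 2))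
              (M ^ 2 * q ^ (2 * ⌊Real.logb (q ^ 2) (μ / M ^ 2)⌋)),
            f ν * (Real.sqrt (ν * (q ^ (-2 : ℤ) - 1)))⁻¹)
      (nhdsWithin 1 (Set.Ioo 0 1)) (nhds (f μ)) := by
  simpa only [qNormalization, qMomentum, qMomentumIndex, smul_eq_mul, mul_comm (f _), mul_add_one]
    using delta_convergence_one_dim_general hM.ne' hμ
      (hf.stronglyMeasurableAtFilter isOpen_Ioi μ hμ)
      ((hf.continuousAt (Ioi_mem_nhds hμ)).tendsto.mono_left inf_le_left)
end

section
/- Let n ≥ 1, M > 0, and let 0 < μ₁ ≤ μ₂ ≤ … ≤ μₙ ≤ M² be real numbers; set μ_{n+1} := M². Let f : (0,∞)ⁿ → ℝ be continuous. For q ∈ (0,1) define integers a_i(q) = ⌊log_{q²}(μ_i/μ_{i+1})⌋ for i = 1,…,n, the set B_q = { ν ∈ (0,∞)ⁿ : ν_{i+1} q^{2a_i(q)+2} < ν_i ≤ ν_{i+1} q^{2a_i(q)} for all i = 1,…,n, where ν_{n+1} := M² }, and α(q,ν) = ∏_{i=1}^n (ν_i (q^{−2} − 1))^{−1/2}. Then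 the limit as q → 1 from below of α(q,μ) · ∫_{B_q} α(q,ν) f(ν) dν (Lebesgue integral over B_q ⊂ ℝⁿ) equals f(μ₁,…,μₙ). -/
/-!
The measure `∏ i, dνᵢ/νᵢ` on `(0,∞)ⁿ` is invariant under coordinatewise scaling. The box `B_q`
prescribes the ratios `νᵢ/νᵢ₊₁` to lie in `(q^(2aᵢ+2), q^(2aᵢ)]`, so integrating out the
coordinates one at a time gives it mass exactly `(-2 log q)ⁿ`, whatever the labels `aᵢ` are.

With respect to this measure the quantity in question is
`(-2 log q / (q⁻² - 1))ⁿ` times the average over `B_q` of `h ν = (∏ i, √(νᵢ/μᵢ)) f ν`. Two points of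
`B_q` agree up to a factor `q^(2n)` in each coordinate and `μ ∈ B_q`, so `B_q` shrinks to `μ` and
the average tends to `h μ = f μ`; the scalar factor tends to `1`.
-/

open MeasureTheory

noncomputable section

/-- `ν_{i+1}`, with the convention `ν_{n+1} = M²`. -/
def nxt (n : ℕ) (M : ℝ) (ν : Fin n → ℝ) (i : Fin n) : ℝ :=
  if h : (i : ℕ) + 1 < n then ν ⟨(i : ℕ) + 1, h⟩ else M ^ 2

/-- The q-lattice labels `a_i(q) = ⌊log_{q²}(μ_i/μ_{i+1})⌋`. -/
def lab (n : ℕ) (M q : ℝ) (μ : Fin n → ℝ) (i : Fin n) : ℤ :=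
  ⌊Real.logb (q ^ 2) (μ i / nxt n M μ i)⌋

/-- The q-box `B_q = {ν : ν_{i+1} q^(2aᵢ(q)+2) < νᵢ ≤ ν_{i+1} q^(2aᵢ(q))}` (with
`ν_{n+1} = M²`). -/
def Bq (n : ℕ) (M q : ℝ) (μ : Fin n → ℝ) : Set (Fin n → ℝ) :=
  {ν | ∀ i, nxt n M ν i * q ^ (2 * lab n M q μ i + 2) < ν i ∧
        ν i ≤ nxt n M ν i * q ^ (2 * lab n M q μ i)}

/-- The normalization `α(q,ν) = ∏ᵢ (νᵢ(q⁻²−1))^(−1/2)`. -/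
def alph (n : ℕ) (q : ℝ) (ν : Fin n → ℝ) : ℝ :=
  ∏ i, (Real.sqrt (ν i * (q ^ (-2 : ℤ) - 1)))⁻¹

open Filter Topology
open scoped NNReal ENNReal

section General

variable {α β ι E : Type*} [MeasurableSpace α] [MeasurableSpace β]
  [NormedAddCommGroup E] [NormedSpace ℝ E]

lemma measurePreserving_withDensity {m : Measure α} {m' : Measure β} {φ : α → β}
    (hφ : MeasurePreserving φ m m') {g : β → ℝ≥0∞} (hg : Measurable g) :
    MeasurePreserving φ (m.withDensity (g ∘ φ)) (m'.withDensity g) := by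
  refine ⟨hφ.measurable, Measure.ext fun s hs ↦ ?_⟩
  rw [Measure.map_apply hφ.measurable hs, withDensity_apply _ (hφ.measurable hs),
    withDensity_apply _ hs]
  exact hφ.setLIntegral_comp_preimage hs hg

lemma finiteAtFilter_nhds_withDensity [TopologicalSpace α] [OpensMeasurableSpace α]
    {m : Measure α} [IsLocallyFiniteMeasure m] {g : α → ℝ≥0} {a : α} (hg : ContinuousAt g a) :
    (m.withDensity fun x ↦ (g x : ℝ≥0∞)).FiniteAtFilter (𝓝 a) := by
  obtain ⟨s, hs, hms⟩ := m.finiteAt_nhds a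
  have hbdd : ∀ᶠ x in 𝓝 a, x ∈ s ∧ g x < g a + 1 :=
    Filter.Eventually.and hs (hg.eventually_lt_const (lt_add_one _))
  obtain ⟨t, htsub, ht, hat⟩ := eventually_nhds_iff.1 hbdd
  refine ⟨t, ht.mem_nhds hat, ?_⟩
  calc (m.withDensity fun x ↦ (g x : ℝ≥0∞)) t = ∫⁻ x in t, g x ∂m :=
        withDensity_apply _ ht.measurableSet
    _ ≤ ∫⁻ _ in t, (g a + 1 : ℝ≥0) ∂m :=
        setLIntegral_mono measurable_const fun x hx ↦ by exact_mod_cast (htsub x hx).2.le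
    _ = (g a + 1 : ℝ≥0) * m t := setLIntegral_const t _
    _ < ∞ := ENNReal.mul_lt_top ENNReal.coe_lt_top
        ((measure_mono fun x hx ↦ (htsub x hx).1).trans_lt hms)

lemma tendsto_setAverage_of_tendsto_smallSets [CompleteSpace E] {m : Measure α} {l : Filter α}
    [l.IsMeasurablyGenerated] {f : α → E} {b : E} (hf : Tendsto f l (𝓝 b))
    (hfm : StronglyMeasurableAtFilter f l m) (hm : m.FiniteAtFilter l)
    {s : ι → Set α} {li : Filter ι} (hs : Tendsto s li l.smallSets)
    (hs₀ : ∀ᶠ i in li, m.real (s i) ≠ 0) :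
    Tendsto (fun i ↦ ⨍ x in s i, f x ∂m) li (𝓝 b) := by
  have herr := (hf.mono_left inf_le_left).integral_sub_linear_isLittleO_ae hfm hm hs
  rw [tendsto_iff_norm_sub_tendsto_zero]
  refine herr.norm_norm.tendsto_div_nhds_zero.congr' ?_
  filter_upwards [hs₀] with i hi
  have hdiff : (⨍ x in s i, f x ∂m) - b =
      (m.real (s i))⁻¹ • ((∫ x in s i, f x ∂m) - m.real (s i) • b) := by
    rw [setAverage_eq, smul_sub, inv_smul_smul₀ hi]
  rw [hdiff, norm_smul, norm_inv, div_eq_inv_mul]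

end General

section LogMeasure

/-- The measure `dx/x` on `(0,∞)`, as a measure on `ℝ`: the density vanishes on `(-∞,0]` since
`Real.toNNReal` truncates negative numbers. -/
def logMeasure : Measure ℝ := volume.withDensity fun x ↦ (x⁻¹.toNNReal : ℝ≥0∞)

/-- The product measure `∏ i, dxᵢ/xᵢ` on `(0,∞)^ι`, as a measure on `ι → ℝ`. -/
def piLogMeasure (ι : Type*) [Fintype ι] : Measure (ι → ℝ) :=
  volume.withDensity fun x ↦ ((∏ i, (x i)⁻¹.toNNReal : ℝ≥0) : ℝ≥0∞)

instance : SFinite logMeasure := by unfold logMeasure; infer_instance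

instance (ι : Type*) [Fintype ι] : SFinite (piLogMeasure ι) := by
  unfold piLogMeasure; infer_instance

lemma logMeasure_Ioc {a b : ℝ} (ha : 0 < a) (hab : a ≤ b) :
    logMeasure (Set.Ioc a b) = ENNReal.ofReal (Real.log (b / a)) := by
  have hint : IntegrableOn (fun x : ℝ ↦ x⁻¹) (Set.Ioc a b) :=
    ((continuousOn_id.inv₀ fun x hx ↦ (ha.trans_le hx.1).ne').integrableOn_Icc).mono_set
      Set.Ioc_subset_Icc_self
  have hnonneg : 0 ≤ᵐ[volume.restrict (Set.Ioc a b)] fun x : ℝ ↦ x⁻¹ := by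
    filter_upwards [ae_restrict_mem measurableSet_Ioc] with x hx
    exact inv_nonneg.2 (ha.trans hx.1).le
  calc logMeasure (Set.Ioc a b) = ∫⁻ x in Set.Ioc a b, ENNReal.ofReal x⁻¹ :=
        withDensity_apply _ measurableSet_Ioc
    _ = ENNReal.ofReal (∫ x in Set.Ioc a b, x⁻¹) :=
        (ofReal_integral_eq_lintegral_ofReal hint hnonneg).symm
    _ = ENNReal.ofReal (Real.log (b / a)) := by
        rw [← intervalIntegral.integral_of_le hab, integral_inv_of_pos ha (ha.trans_le hab)]

variable {ι E : Type*} [Fintype ι] [NormedAddCommGroup E] [NormedSpace ℝ E]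

lemma measurable_prod_toNNReal_inv :
    Measurable fun x : ι → ℝ ↦ ∏ i, (x i)⁻¹.toNNReal :=
  Finset.measurable_fun_prod _ fun i _ ↦ (measurable_pi_apply i).inv.real_toNNReal

lemma piLogMeasure_absolutelyContinuous : piLogMeasure ι ≪ volume :=
  withDensity_absolutelyContinuous _ _

lemma piLogMeasure_of_isEmpty [IsEmpty ι] : piLogMeasure ι = volume := by
  simp [piLogMeasure]

lemma finiteAtFilter_nhds_piLogMeasure {μ : ι → ℝ} (hμ : ∀ i, μ i ≠ 0) :
    (piLogMeasure ι).FiniteAtFilter (𝓝 μ) := by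
  refine finiteAtFilter_nhds_withDensity (tendsto_finsetProd _ fun i _ ↦ ?_)
  exact (continuous_real_toNNReal.tendsto _).comp ((continuousAt_apply i μ).inv₀ (hμ i))

lemma setIntegral_piLogMeasure {s : Set (ι → ℝ)} (hs : MeasurableSet s)
    (hpos : ∀ x ∈ s, ∀ i, 0 < x i) (f : (ι → ℝ) → E) :
    ∫ x in s, f x ∂piLogMeasure ι = ∫ x in s, (∏ i, (x i)⁻¹) • f x := by
  rw [piLogMeasure,
    setIntegral_withDensity_eq_setIntegral_smul measurable_prod_toNNReal_inv _ hs]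
  refine setIntegral_congr_fun hs fun x hx ↦ ?_
  simp only [NNReal.smul_def, NNReal.coe_prod]
  congr 1
  exact Finset.prod_congr rfl fun i _ ↦ Real.coe_toNNReal _ (inv_nonneg.2 (hpos x hx i).le)

lemma measurePreserving_cons_piLogMeasure (n : ℕ) :
    MeasurePreserving (fun p : ℝ × (Fin n → ℝ) ↦ (Fin.cons p.1 p.2 : Fin (n + 1) → ℝ))
      (logMeasure.prod (piLogMeasure (Fin n))) (piLogMeasure (Fin (n + 1))) := by
  have hcons : (MeasurableEquiv.piFinSuccAbove (fun _ : Fin (n + 1) ↦ ℝ) 0).symm =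
      fun p : ℝ × (Fin n → ℝ) ↦ (Fin.cons p.1 p.2 : Fin (n + 1) → ℝ) := by
    ext p : 1
    simp [MeasurableEquiv.piFinSuccAbove, Fin.consEquiv]
  have hvol : MeasurePreserving
      (fun p : ℝ × (Fin n → ℝ) ↦ (Fin.cons p.1 p.2 : Fin (n + 1) → ℝ)) volume volume :=
    hcons ▸ (volume_preserving_piFinSuccAbove (fun _ : Fin (n + 1) ↦ ℝ) 0).symm
  have hdensity : logMeasure.prod (piLogMeasure (Fin n)) = volume.withDensity
      ((fun x : Fin (n + 1) → ℝ ↦ ((∏ i, (x i)⁻¹.toNNReal : ℝ≥0) : ℝ≥0∞)) ∘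
        fun p : ℝ × (Fin n → ℝ) ↦ (Fin.cons p.1 p.2 : Fin (n + 1) → ℝ)) := by
    rw [logMeasure, piLogMeasure, prod_withDensity (by fun_prop)
      measurable_prod_toNNReal_inv.coe_nnreal_ennreal, Measure.volume_eq_prod]
    congr 1
    ext p
    simp [Fin.prod_univ_succ]
  rw [hdensity]
  exact measurePreserving_withDensity hvol measurable_prod_toNNReal_inv.coe_nnreal_ennreal

end LogMeasure

section RatioBox

variable {n : ℕ} {T : ℝ} {c d : Fin n → ℝ}

/-- The set of points `ν` for which each ratio `νᵢ/νᵢ₊₁` lies in `(cᵢ, dᵢ]`, where the coordinate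
following the last one is `T`. -/
def ratioBox (T : ℝ) (c d : Fin n → ℝ) : Set (Fin n → ℝ) :=
  {ν | ∀ i, ν i ∈ Set.Ioc (Fin.snoc (α := fun _ ↦ ℝ) ν T i.succ * c i)
    (Fin.snoc (α := fun _ ↦ ℝ) ν T i.succ * d i)}

lemma cons_mem_ratioBox {c d : Fin (n + 1) → ℝ} {x : ℝ} {ν : Fin n → ℝ} :
    Fin.cons x ν ∈ ratioBox T c d ↔
      x ∈ Set.Ioc (Fin.snoc (α := fun _ ↦ ℝ) ν T 0 * c 0)
        (Fin.snoc (α := fun _ ↦ ℝ) ν T 0 * d 0) ∧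
      ν ∈ ratioBox T (Fin.tail c) (Fin.tail d) := by
  simp only [ratioBox, Set.mem_ofPred_eq, Fin.forall_fin_succ, ← Fin.cons_snoc_eq_snoc_cons,
    Fin.cons_zero, Fin.cons_succ, Fin.tail]

lemma measurableSet_ratioBox : MeasurableSet (ratioBox T c d) := by
  have hsnoc (j : Fin (n + 1)) :
      Measurable fun ν : Fin n → ℝ ↦ Fin.snoc (α := fun _ ↦ ℝ) ν T j := by
    cases j using Fin.lastCases with
    | last => simp only [Fin.snoc_last, measurable_const]
    | cast i => simpa only [Fin.snoc_castSucc] using measurable_pi_apply i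
  rw [ratioBox, Set.ofPred_forall]
  exact MeasurableSet.iInter fun i ↦
    (measurableSet_lt ((hsnoc i.succ).mul_const _) (measurable_pi_apply i)).inter
      (measurableSet_le (measurable_pi_apply i) ((hsnoc i.succ).mul_const _))

lemma snoc_pos_of_mem_ratioBox (hT : 0 < T) (hc : ∀ i, 0 < c i) {ν : Fin n → ℝ}
    (hν : ν ∈ ratioBox T c d) (j : Fin (n + 1)) : 0 < Fin.snoc (α := fun _ ↦ ℝ) ν T j := by
  induction j using Fin.reverseInduction with
  | last => simpa only [Fin.snoc_last] using hT
  | cast i ih => simpa only [Fin.snoc_castSucc] using (mul_pos ih (hc i)).trans (hν i).1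

lemma pos_of_mem_ratioBox (hT : 0 < T) (hc : ∀ i, 0 < c i) {ν : Fin n → ℝ}
    (hν : ν ∈ ratioBox T c d) (i : Fin n) : 0 < ν i := by
  simpa only [Fin.snoc_castSucc] using snoc_pos_of_mem_ratioBox hT hc hν i.castSucc

lemma piLogMeasure_ratioBox (hT : 0 < T) (hc : ∀ i, 0 < c i) (hcd : c ≤ d) :
    piLogMeasure (Fin n) (ratioBox T c d) = ∏ i, ENNReal.ofReal (Real.log (d i / c i)) := by
  induction n with
  | zero =>
    have huniv : ratioBox T c d = Set.univ := Set.eq_univ_of_forall fun ν i ↦ i.elim0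
    simp [piLogMeasure_of_isEmpty, huniv, volume_pi]
  | succ n ih =>
    set B := ratioBox T (Fin.tail c) (Fin.tail d) with hB
    have hslice (ν : Fin n → ℝ) : logMeasure {x | Fin.cons x ν ∈ ratioBox T c d} =
        B.indicator (fun _ ↦ ENNReal.ofReal (Real.log (d 0 / c 0))) ν := by
      by_cases hν : ν ∈ B
      · have hpos := snoc_pos_of_mem_ratioBox hT (fun i ↦ hc i.succ) hν 0
        simp only [cons_mem_ratioBox, ← hB, hν, and_true, Set.ofPred_mem_eq,
          Set.indicator_of_mem]
        rw [logMeasure_Ioc (mul_pos hpos (hc 0)) (mul_le_mul_of_nonneg_left (hcd 0) hpos.le),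
          mul_div_mul_left _ _ hpos.ne']
      · simp [cons_mem_ratioBox, ← hB, hν]
    have hcons := measurePreserving_cons_piLogMeasure n
    rw [← hcons.measure_preimage measurableSet_ratioBox.nullMeasurableSet,
      Measure.prod_apply_symm (hcons.measurable measurableSet_ratioBox)]
    refine (lintegral_congr hslice).trans ?_
    rw [lintegral_indicator_const measurableSet_ratioBox,
      ih (c := Fin.tail c) (d := Fin.tail d) (fun i ↦ hc i.succ) (fun i ↦ hcd i.succ),
      Fin.prod_univ_succ]
    rfl

lemma pow_rev_mul_snoc_le_snoc {s : ℝ} (hs : 0 ≤ s) (hd : 0 ≤ d) {u v : Fin n → ℝ}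
    (hu : u ∈ ratioBox T (s • d) d) (hv : v ∈ ratioBox T (s • d) d) (j : Fin (n + 1)) :
    s ^ (j.rev : ℕ) * Fin.snoc (α := fun _ ↦ ℝ) u T j ≤ Fin.snoc (α := fun _ ↦ ℝ) v T j := by
  induction j using Fin.reverseInduction with
  | last => simp
  | cast i ih =>
    have hrev : (i.castSucc.rev : ℕ) = i.succ.rev + 1 := by simp [Fin.val_rev]; omega
    have hdi : 0 ≤ d i := hd i
    simp only [Fin.snoc_castSucc, hrev]
    calc s ^ (i.succ.rev + 1 : ℕ) * u i
        ≤ s ^ (i.succ.rev + 1 : ℕ) * (Fin.snoc (α := fun _ ↦ ℝ) u T i.succ * d i) := by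
          gcongr; exact (hu i).2
      _ = s ^ (i.succ.rev : ℕ) * Fin.snoc (α := fun _ ↦ ℝ) u T i.succ * (s * d i) := by ring
      _ ≤ Fin.snoc (α := fun _ ↦ ℝ) v T i.succ * (s * d i) := by gcongr
      _ ≤ v i := (hv i).1.le

lemma pow_mul_le_of_mem_ratioBox {s : ℝ} (hs : 0 < s) (hs₁ : s ≤ 1) (hT : 0 < T)
    (hd : ∀ i, 0 < d i) {u v : Fin n → ℝ} (hu : u ∈ ratioBox T (s • d) d)
    (hv : v ∈ ratioBox T (s • d) d) (i : Fin n) : s ^ n * u i ≤ v i := by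
  have hui := pos_of_mem_ratioBox hT (fun i ↦ mul_pos hs (hd i)) hu i
  calc s ^ n * u i ≤ s ^ (i.castSucc.rev : ℕ) * u i := by
        gcongr ?_ * _
        exact pow_le_pow_of_le_one hs.le hs₁ (Fin.is_le _)
    _ ≤ v i := by
        simpa only [Fin.snoc_castSucc] using
          pow_rev_mul_snoc_le_snoc hs.le (fun i ↦ (hd i).le) hu hv i.castSucc

end RatioBox

section QBox

variable {n : ℕ} {M q : ℝ} {μ ν : Fin n → ℝ}

lemma nxt_eq_snoc (n : ℕ) (M : ℝ) (ν : Fin n → ℝ) (i : Fin n) :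
    nxt n M ν i = Fin.snoc (α := fun _ ↦ ℝ) ν (M ^ 2) i.succ := by
  simp [nxt, Fin.snoc, Fin.castLT]

lemma nxt_pos (hM : M ≠ 0) (hμ : ∀ i, 0 < μ i) (i : Fin n) : 0 < nxt n M μ i := by
  unfold nxt
  split_ifs
  · exact hμ _
  · positivity

lemma Bq_eq_ratioBox (hq : q ≠ 0) (μ : Fin n → ℝ) :
    Bq n M q μ = ratioBox (M ^ 2) (q ^ 2 • fun i ↦ q ^ (2 * lab n M q μ i))
      (fun i ↦ q ^ (2 * lab n M q μ i)) := by
  ext ν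
  simp only [Bq, ratioBox, nxt_eq_snoc, Set.mem_ofPred_eq, Set.mem_Ioc, Pi.smul_apply, smul_eq_mul,
    zpow_add₀ hq, zpow_ofNat, mul_comm (q ^ 2)]

lemma measurableSet_Bq (hq : q ≠ 0) : MeasurableSet (Bq n M q μ) :=
  Bq_eq_ratioBox hq μ ▸ measurableSet_ratioBox

lemma pos_of_mem_Bq (hM : M ≠ 0) (hq : 0 < q) (hν : ν ∈ Bq n M q μ) (i : Fin n) : 0 < ν i := by
  rw [Bq_eq_ratioBox hq.ne'] at hν
  exact pos_of_mem_ratioBox (by positivity) (fun i ↦ mul_pos (by positivity) (zpow_pos hq _)) hν i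

lemma mem_Bq_self (hM : M ≠ 0) (hq : q ∈ Set.Ioo 0 1) (hμ : ∀ i, 0 < μ i) : μ ∈ Bq n M q μ := by
  intro i
  have hnxt := nxt_pos hM hμ i
  have hratio := div_pos (hμ i) hnxt
  have hq₀ : 0 < q ^ 2 := pow_pos hq.1 2
  have hq₁ : q ^ 2 < 1 := pow_lt_one₀ hq.1.le hq.2 two_ne_zero
  have hzpow (k : ℤ) : q ^ (2 * k) = (q ^ 2) ^ (k : ℝ) := by
    rw [Real.rpow_intCast, zpow_mul, zpow_ofNat]
  rw [show 2 * lab n M q μ i + 2 = 2 * (lab n M q μ i + 1) by ring, hzpow, hzpow,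
    ← lt_div_iff₀' hnxt, ← div_le_iff₀' hnxt,
    ← Real.logb_lt_iff_lt_rpow_of_base_lt_one hq₀ hq₁ hratio,
    ← Real.le_logb_iff_rpow_le_of_base_lt_one hq₀ hq₁ hratio]
  push_cast
  exact ⟨Int.lt_floor_add_one _, Int.floor_le _⟩

lemma Bq_subset_Icc (hM : M ≠ 0) (hq : q ∈ Set.Ioo 0 1) (hμ : ∀ i, 0 < μ i) :
    Bq n M q μ ⊆ Set.Icc ((q ^ 2) ^ n • μ) (((q ^ 2) ^ n)⁻¹ • μ) := by
  intro ν hν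
  have hμB := mem_Bq_self hM hq hμ
  rw [Bq_eq_ratioBox hq.1.ne'] at hν hμB
  have hq₀ : 0 < q ^ 2 := pow_pos hq.1 2
  have hclose {u v : Fin n → ℝ} := pow_mul_le_of_mem_ratioBox (u := u) (v := v) hq₀
    (pow_le_one₀ hq.1.le hq.2.le) (sq_pos_of_ne_zero hM) fun i ↦ zpow_pos hq.1 (2 * lab n M q μ i)
  exact ⟨fun i ↦ hclose hμB hν i,
    fun i ↦ (le_inv_mul_iff₀ (pow_pos hq₀ n)).2 (hclose hν hμB i)⟩

lemma tendsto_Bq_smallSets (hM : M ≠ 0) (hμ : ∀ i, 0 < μ i) :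
    Tendsto (fun q ↦ Bq n M q μ) (𝓝[Set.Ioo 0 1] 1) (𝓝 μ).smallSets := by
  have hlower : Tendsto (fun q : ℝ ↦ (q ^ 2) ^ n • μ) (𝓝[Set.Ioo 0 1] 1) (𝓝 μ) := by
    have : Continuous fun q : ℝ ↦ (q ^ 2) ^ n • μ := by fun_prop
    simpa using (this.tendsto 1).mono_left nhdsWithin_le_nhds
  have hupper : Tendsto (fun q : ℝ ↦ ((q ^ 2) ^ n)⁻¹ • μ) (𝓝[Set.Ioo 0 1] 1) (𝓝 μ) := by
    have : ContinuousAt (fun q : ℝ ↦ ((q ^ 2) ^ n)⁻¹ • μ) 1 := by fun_prop (disch := simp)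
    simpa using this.tendsto.mono_left nhdsWithin_le_nhds
  refine (hlower.Icc hupper).smallSets_mono ?_
  filter_upwards [self_mem_nhdsWithin] with q hq using Bq_subset_Icc hM hq hμ

lemma neg_two_mul_log_pos (hq : q ∈ Set.Ioo 0 1) : 0 < -2 * Real.log q :=
  mul_pos_of_neg_of_neg (by norm_num) (Real.log_neg hq.1 hq.2)

lemma piLogMeasure_real_Bq (hM : M ≠ 0) (hq : q ∈ Set.Ioo 0 1) :
    (piLogMeasure (Fin n)).real (Bq n M q μ) = (-2 * Real.log q) ^ n := by
  have hq₀ : 0 < q ^ 2 := pow_pos hq.1 2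
  have hside (k : ℤ) : Real.log (q ^ k / (q ^ 2 * q ^ k)) = -2 * Real.log q := by
    rw [div_mul_cancel_right₀ (zpow_pos hq.1 k).ne', Real.log_inv, Real.log_pow]
    push_cast
    ring
  rw [Measure.real, Bq_eq_ratioBox hq.1.ne', piLogMeasure_ratioBox (sq_pos_of_ne_zero hM)
    (c := q ^ 2 • fun i ↦ q ^ (2 * lab n M q μ i)) (fun i ↦ mul_pos hq₀ (zpow_pos hq.1 _))
    (fun i ↦ mul_le_of_le_one_left (zpow_pos hq.1 _).le (pow_le_one₀ hq.1.le hq.2.le))]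
  simp only [Pi.smul_apply, smul_eq_mul, hside, Finset.prod_const, Finset.card_univ,
    Fintype.card_fin, ENNReal.toReal_pow, ENNReal.toReal_ofReal (neg_two_mul_log_pos hq).le]

end QBox

section Normalization

variable {n : ℕ} {M q : ℝ} {μ ν : Fin n → ℝ}
  {E : Type*} [NormedAddCommGroup E] [NormedSpace ℝ E]

lemma inv_sqrt_mul_mul_inv_sqrt_mul {a b k : ℝ} (ha : 0 ≤ a) (hb : 0 ≤ b) (hk : 0 ≤ k) :
    (√(a * k))⁻¹ * (√(b * k))⁻¹ = k⁻¹ * (b⁻¹ * √(b / a)) := by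
  rw [Real.sqrt_mul ha, Real.sqrt_mul hb, Real.sqrt_div hb]
  calc (√a * √k)⁻¹ * (√b * √k)⁻¹ = (√k * √k)⁻¹ * ((√b)⁻¹ * (√a)⁻¹) := by
        simp only [mul_inv]; ring
    _ = k⁻¹ * (b⁻¹ * (√b / √a)) := by
        rw [Real.mul_self_sqrt hk, div_eq_mul_inv, ← mul_assoc b⁻¹, inv_mul_eq_div b,
          Real.sqrt_div_self]

lemma inv_sq_sub_one_pos (hq : q ∈ Set.Ioo 0 1) : 0 < q ^ (-2 : ℤ) - 1 :=
  sub_pos.2 (one_lt_zpow_of_neg₀ hq.1 hq.2 (by norm_num))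

lemma alph_mul_alph (hq : q ∈ Set.Ioo 0 1) (hμ : ∀ i, 0 ≤ μ i) (hν : ∀ i, 0 ≤ ν i) :
    alph n q μ * alph n q ν =
      ((q ^ (-2 : ℤ) - 1) ^ n)⁻¹ * ((∏ i, (ν i)⁻¹) * ∏ i, √(ν i / μ i)) := by
  simp only [alph, ← Finset.prod_mul_distrib,
    inv_sqrt_mul_mul_inv_sqrt_mul (hμ _) (hν _) (inv_sq_sub_one_pos hq).le]
  simp only [Finset.prod_mul_distrib, Finset.prod_const, Finset.card_univ, Fintype.card_fin,
    inv_pow]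

lemma alph_smul_setIntegral_eq_smul_setAverage (hM : M ≠ 0) (hq : q ∈ Set.Ioo 0 1)
    (hμ : ∀ i, 0 ≤ μ i) (f : (Fin n → ℝ) → E) :
    alph n q μ • ∫ ν in Bq n M q μ, alph n q ν • f ν =
      (-2 * Real.log q / (q ^ (-2 : ℤ) - 1)) ^ n •
        ⨍ ν in Bq n M q μ, (∏ i, √(ν i / μ i)) • f ν ∂piLogMeasure (Fin n) := by
  have hB : MeasurableSet (Bq n M q μ) := measurableSet_Bq hq.1.ne'
  have hpos : ∀ ν ∈ Bq n M q μ, ∀ i, 0 < ν i := fun ν ↦ pos_of_mem_Bq hM hq.1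
  have hmass : (-2 * Real.log q) ^ n ≠ 0 := (pow_pos (neg_two_mul_log_pos hq) n).ne'
  calc alph n q μ • ∫ ν in Bq n M q μ, alph n q ν • f ν
      = ((q ^ (-2 : ℤ) - 1) ^ n)⁻¹ •
          ∫ ν in Bq n M q μ, (∏ i, (ν i)⁻¹) • (∏ i, √(ν i / μ i)) • f ν := by
        rw [← integral_smul, ← integral_smul]
        refine setIntegral_congr_fun hB fun ν hν ↦ ?_
        simp only [smul_smul]
        rw [alph_mul_alph hq hμ fun i ↦ (hpos ν hν i).le]
    _ = _ := by
        rw [← setIntegral_piLogMeasure hB hpos, setAverage_eq, piLogMeasure_real_Bq hM hq,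
          smul_smul, div_pow, div_mul_eq_mul_div, mul_inv_cancel₀ hmass, one_div]

end Normalization

lemma tendsto_neg_two_mul_log_div :
    Tendsto (fun q : ℝ ↦ -2 * Real.log q / (q ^ (-2 : ℤ) - 1)) (𝓝[Set.Ioo 0 1] 1) (𝓝 1) := by
  have hslope : Tendsto (slope Real.log 1) (𝓝[≠] 1) (𝓝 1) := by
    simpa using hasDerivAt_iff_tendsto_slope.1 (Real.hasDerivAt_log one_ne_zero)
  have hzpow : Tendsto (fun q : ℝ ↦ q ^ (-2 : ℤ)) (𝓝[Set.Ioo 0 1] 1) (𝓝[≠] 1) := by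
    refine tendsto_nhdsWithin_iff.2 ⟨?_, ?_⟩
    · simpa using (continuousAt_zpow₀ (1 : ℝ) (-2) (Or.inl one_ne_zero)).tendsto.mono_left
        nhdsWithin_le_nhds
    · filter_upwards [self_mem_nhdsWithin] with q hq
      exact (sub_pos.1 (inv_sq_sub_one_pos hq)).ne'
  refine (hslope.comp hzpow).congr fun q ↦ ?_
  simp [slope_def_field]

theorem delta_convergence_multi_dim_general {E : Type*} [NormedAddCommGroup E] [NormedSpace ℝ E]
    [CompleteSpace E] {n : ℕ} {M : ℝ} (hM : M ≠ 0) {μ : Fin n → ℝ} (hμ : ∀ i, 0 < μ i)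
    {f : (Fin n → ℝ) → E} (hf : ContinuousAt f μ)
    (hfm : StronglyMeasurableAtFilter f (𝓝 μ)) :
    Tendsto (fun q : ℝ ↦ alph n q μ • ∫ ν in Bq n M q μ, alph n q ν • f ν)
      (𝓝[Set.Ioo 0 1] 1) (𝓝 (f μ)) := by
  have hweight : Continuous fun ν : Fin n → ℝ ↦ ∏ i, √(ν i / μ i) := by fun_prop
  have hlim : Tendsto (fun ν ↦ (∏ i, √(ν i / μ i)) • f ν) (𝓝 μ) (𝓝 (f μ)) := by
    simpa [div_self (hμ _).ne'] using hweight.continuousAt.tendsto.smul hf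
  have hmeas : StronglyMeasurableAtFilter (fun ν ↦ (∏ i, √(ν i / μ i)) • f ν) (𝓝 μ)
      (piLogMeasure (Fin n)) := by
    obtain ⟨s, hs, hfs⟩ := hfm
    exact ⟨s, hs, hweight.aestronglyMeasurable.smul
      (hfs.mono_ac (piLogMeasure_absolutelyContinuous.restrict s))⟩
  have havg := tendsto_setAverage_of_tendsto_smallSets hlim hmeas
    (finiteAtFilter_nhds_piLogMeasure fun i ↦ (hμ i).ne') (tendsto_Bq_smallSets hM hμ) <| by
      filter_upwards [self_mem_nhdsWithin] with q hq
      rw [piLogMeasure_real_Bq hM hq]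
      exact (pow_pos (neg_two_mul_log_pos hq) n).ne'
  have hprod := (tendsto_neg_two_mul_log_div.pow n).smul havg
  rw [one_pow, one_smul] at hprod
  refine hprod.congr' ?_
  filter_upwards [self_mem_nhdsWithin] with q hq
  exact (alph_smul_setIntegral_eq_smul_setAverage hM hq (fun i ↦ (hμ i).le) f).symm

/-- Delta convergence of the rescaled q-lattice eigenvectors of the
singlet representation of `U_q(e^{2n})`: for `0 < μ₁ ≤ … ≤ μₙ ≤ M²` and `f` continuous
on `(0,∞)ⁿ`, the limit as `q → 1⁻` of `α(q,μ) ∫_{B_q} α(q,ν) f(ν) dν` equals `f(μ)`. -/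
theorem delta_convergence_multi_dim
    (n : ℕ) (hn : 1 ≤ n) (M : ℝ) (hM : 0 < M)
    (μ : Fin n → ℝ) (hpos : ∀ i, 0 < μ i) (hmono : Monotone μ)
    (htop : ∀ i, μ i ≤ M ^ 2)
    (f : (Fin n → ℝ) → ℝ) (hf : ContinuousOn f {ν | ∀ i, 0 < ν i}) :
    Filter.Tendsto
      (fun q : ℝ => alph n q μ * ∫ ν in Bq n M q μ, alph n q ν * f ν)
      (nhdsWithin 1 (Set.Ioo 0 1)) (nhds (f μ)) := by
  have hopen : IsOpen {ν : Fin n → ℝ | ∀ i, 0 < ν i} := by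
    simpa [Set.pi] using isOpen_set_pi Set.finite_univ fun (_ : Fin n) _ ↦ isOpen_Ioi (a := (0 : ℝ))
  exact delta_convergence_multi_dim_general hM.ne' hpos (hf.continuousAt (hopen.mem_nhds hpos))
    (hf.stronglyMeasurableAtFilter hopen μ hpos)
end
end
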